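/- Let k be a finite field with q elements and M a connected linear algebraic group over k of dimension d. Then (q-1)^d ≤ #M(k) ≤ (q+1)^d. -/

import Mathlib

theorem pc_krull_le_of_integral {R S : Type*} [CommRing R] [CommRing S] [Algebra R S]
    [Algebra.IsIntegral R S] : ringKrullDim S ≤ ringKrullDim R := by
  refine Order.krullDim_le_of_strictMono (PrimeSpectrum.comap (algebraMap R S)) ?_
  intro P Q h
  exact Ideal.IsIntegral.comap_lt_comap (R := R) (I := P.asIdeal) (J := Q.asIdeal) h

theorem pc_krull_eq_of_integral {R S : Type*} [CommRing R] [CommRing S] [Algebra R S]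
    [Algebra.IsIntegral R S] (hinj : Function.Injective (algebraMap R S)) :
    ringKrullDim S = ringKrullDim R := by
  refine le_antisymm pc_krull_le_of_integral ?_
  refine iSup_le fun l => ?_
  obtain ⟨Q, -, hQ, hQ'⟩ := Ideal.exists_ideal_over_prime_of_isIntegral (S := S)
    (RelSeries.head l).asIdeal ⊥ (by
      rw [← RingHom.ker_eq_comap_bot, (RingHom.injective_iff_ker_eq_bot _).1 hinj]; exact bot_le)
  have : Q.LiesOver (RelSeries.head l).asIdeal := ⟨hQ'.symm⟩
  obtain ⟨L, hL, -, -⟩ := Ideal.exists_ltSeries_of_hasGoingUp (S := S) l Q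
  rw [← hL]
  exact le_iSup (fun p : LTSeries (PrimeSpectrum S) => ((p.length : ℕ∞) : WithBot ℕ∞)) L

theorem pc_finrank_restrictDegree (k : Type*) [Field k] (d n : ℕ) :
    Module.finrank k (MvPolynomial.restrictDegree (Fin d) k n) = (n + 1) ^ d := by
  have b := MvPolynomial.basisRestrictSupport k (σ := Fin d) {s | ∀ i, s i ≤ n}
  have e : ({s : Fin d →₀ ℕ | ∀ i, s i ≤ n} : Set _) ≃ (Fin d → Fin (n + 1)) :=
    { toFun := fun s i => ⟨s.1 i, Nat.lt_succ_of_le (s.2 i)⟩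
      invFun := fun f => ⟨Finsupp.equivFunOnFinite.symm fun i => (f i : ℕ), fun i => by
        simpa using Nat.le_of_lt_succ (f i).2⟩
      left_inv := fun s => by ext; simp
      right_inv := fun f => by ext; simp }
  rw [MvPolynomial.restrictDegree, Module.finrank_eq_nat_card_basis b, Nat.card_congr e]
  simp

theorem pc_finrank_mul_le {k A : Type*} [Field k] [CommRing A] [Algebra k A]
    (U W : Submodule k A) (hU : U.FG) (hW : W.FG) :
    Module.finrank k ↥(U * W) ≤ Module.finrank k U * Module.finrank k W := by
  have := Module.Finite.iff_fg.2 hU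
  have := Module.Finite.iff_fg.2 hW
  rw [← Submodule.mulMap_range, ← Module.finrank_tensorProduct]
  exact LinearMap.finrank_range_le _

section
variable {k A : Type*} [Field k] [CommRing A] [Algebra k A]

theorem pc_pow_mono {V : Submodule k A} (h1 : 1 ≤ V) {m n : ℕ} (h : m ≤ n) : V ^ m ≤ V ^ n :=
  pow_le_pow_right₀ h1 h

theorem pc_exists_mem_pow {V : Submodule k A} (h1 : 1 ≤ V)
    (hgen : Algebra.adjoin k (V : Set A) = ⊤) (a : A) : ∃ s, a ∈ V ^ s := by
  have ha : a ∈ Algebra.adjoin k (V : Set A) := hgen ▸ trivial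
  induction ha using Algebra.adjoin_induction with
  | mem x hx => exact ⟨1, by simpa using hx⟩
  | algebraMap r => exact ⟨0, by simp⟩
  | add x y _ _ hx hy =>
    obtain ⟨s, hs⟩ := hx
    obtain ⟨t, ht⟩ := hy
    exact ⟨max s t, add_mem (pc_pow_mono h1 (le_max_left _ _) hs)
      (pc_pow_mono h1 (le_max_right _ _) ht)⟩
  | mul x y _ _ hx hy =>
    obtain ⟨s, hs⟩ := hx
    obtain ⟨t, ht⟩ := hy
    exact ⟨s + t, by rw [pow_add]; exact Submodule.mul_mem_mul hs ht⟩

/-- FG submodules are contained in a member of an exhaustive chain. -/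
theorem pc_fg_le {B : ℕ → Submodule k A} (hB : Monotone B) (hex : ∀ a, ∃ s, a ∈ B s)
    {W : Submodule k A} (hW : W.FG) : ∃ s, W ≤ B s := by
  classical
  obtain ⟨S, rfl⟩ := hW
  induction S using Finset.induction_on with
  | empty => exact ⟨0, by simp⟩
  | insert a S _ ih =>
    obtain ⟨s, hs⟩ := ih
    obtain ⟨t, ht⟩ := hex a
    refine ⟨max s t, ?_⟩
    rw [Finset.coe_insert, Submodule.span_insert, sup_le_iff]
    exact ⟨by simpa using hB (le_max_right _ _) ht, hs.trans (hB (le_max_left _ _))⟩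

theorem pc_growth [Algebra.FiniteType k A] [Nontrivial A] (d : ℕ) (hdim : ringKrullDim A = d)
    (V : Submodule k A) (hV : V.FG) (h1 : 1 ≤ V) (hgen : Algebra.adjoin k (V : Set A) = ⊤) :
    (∃ C D : ℕ, ∀ m, Module.finrank k ↥(V ^ m) ≤ C * (D * m + 1) ^ d) ∧
      (∃ E : ℕ, ∀ m, m ^ d ≤ Module.finrank k ↥(V ^ (E * m))) := by
  obtain ⟨s, g, hinj, hfin⟩ := exists_finite_inj_algHom_of_fg k A
  have hsd : s = d := by
    let := g.toRingHom.toAlgebra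
    have : Module.Finite (MvPolynomial (Fin s) k) A := hfin
    have h := pc_krull_eq_of_integral (R := MvPolynomial (Fin s) k) (S := A) hinj
    rw [hdim, MvPolynomial.ringKrullDim_of_isNoetherianRing, ringKrullDim_eq_zero_of_field] at h
    simp at h
    exact_mod_cast h.symm
  subst hsd
  set B : ℕ → Submodule k A := fun n =>
    (MvPolynomial.restrictDegree (Fin s) k n).map g.toLinearMap with hB
  have hBfin : ∀ n, (B n).FG := fun n =>
    (Module.Finite.iff_fg.1 (inferInstance :
      Module.Finite k (MvPolynomial.restrictDegree (Fin s) k n))).map _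
  have hBrank : ∀ n, Module.finrank k (B n) = (n + 1) ^ s := fun n => by
    rw [← pc_finrank_restrictDegree k s n]
    exact (LinearEquiv.finrank_eq (Submodule.equivMapOfInjective g.toLinearMap hinj _)).symm
  have hBmono : Monotone B := fun m n h => Submodule.map_mono
    (MvPolynomial.restrictSupport_mono _ fun f hf i => (hf i).trans h)
  have hBmul : ∀ m n, B m * B n ≤ B (m + n) := fun m n => by
    simp only [hB]
    rw [← Submodule.map_mul]
    refine Submodule.map_mono ?_
    simp only [MvPolynomial.restrictDegree]
    rw [← MvPolynomial.restrictSupport_add]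
    refine MvPolynomial.restrictSupport_mono _ ?_
    rintro _ ⟨x, hx, y, hy, rfl⟩ i
    exact add_le_add (hx i) (hy i)
  have hB1 : 1 ≤ B 0 := by
    rw [Submodule.one_le]
    refine ⟨1, ?_, by simp⟩
    rw [← MvPolynomial.C_1, MvPolynomial.C_apply]
    exact (MvPolynomial.monomial_mem_restrictSupport (R := k)).2 (Or.inl fun i => by simp)
  have hBex : ∀ p, ∃ n, g p ∈ B n := fun p =>
    ⟨p.totalDegree, p, MvPolynomial.restrictTotalDegree_le_restrictDegree _ _ _
      ((MvPolynomial.mem_restrictTotalDegree _ _ _).2 le_rfl), rfl⟩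
  constructor
  · obtain ⟨W, hWfg, hW1, hWB⟩ : ∃ W : Submodule k A, W.FG ∧ 1 ≤ W ∧ ∀ a, ∃ n, a ∈ W * B n := by
      classical
      let := g.toRingHom.toAlgebra
      have : Module.Finite (MvPolynomial (Fin s) k) A := hfin
      obtain ⟨S, hS⟩ := (Module.finite_def (R := MvPolynomial (Fin s) k) (M := A)).1 this
      refine ⟨Submodule.span k (insert 1 S : Finset A), ⟨_, rfl⟩, ?_, fun a => ?_⟩
      · rw [Submodule.one_le]; exact Submodule.subset_span (by simp)
      have ha : a ∈ Submodule.span (MvPolynomial (Fin s) k) (S : Set A) := hS ▸ trivial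
      induction ha using Submodule.span_induction with
      | mem x hx =>
        refine ⟨0, ?_⟩
        rw [← mul_one x]
        exact Submodule.mul_mem_mul (Submodule.subset_span (by simp [hx])) (Submodule.one_le.1 hB1)
      | zero => exact ⟨0, zero_mem _⟩
      | add x y _ _ hx hy =>
        obtain ⟨m, hm⟩ := hx
        obtain ⟨n, hn⟩ := hy
        exact ⟨max m n, add_mem (mul_le_mul' le_rfl (hBmono (le_max_left _ _)) hm)
          (mul_le_mul' le_rfl (hBmono (le_max_right _ _)) hn)⟩
      | smul p x _ hx =>
        obtain ⟨m, hm⟩ := hx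
        obtain ⟨n, hn⟩ := hBex p
        refine ⟨m + n, ?_⟩
        have : p • x = x * g p := by rw [mul_comm]; rfl
        rw [this]
        refine mul_le_mul' le_rfl (hBmul m n) ?_
        rw [← mul_assoc]
        exact Submodule.mul_mem_mul hm hn
    obtain ⟨D, hD⟩ := pc_fg_le (B := fun n => W * B n)
      (fun m n h => mul_le_mul' le_rfl (hBmono h)) hWB (hV.mul hWfg)
    have key : ∀ m, V ^ m * W ≤ W * B (D * m) := by
      intro m
      induction m with
      | zero => simpa using (mul_le_mul_right hB1 W)
      | succ m ih =>
        calc V ^ (m + 1) * W = V * (V ^ m * W) := by ring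
          _ ≤ V * (W * B (D * m)) := by gcongr
          _ = V * W * B (D * m) := by ring
          _ ≤ W * B D * B (D * m) := by gcongr
          _ = W * (B D * B (D * m)) := by ring
          _ ≤ W * B (D * (m + 1)) := by
            gcongr
            refine (hBmul _ _).trans (hBmono ?_)
            exact le_of_eq (by ring)
    refine ⟨Module.finrank k W, D, fun m => ?_⟩
    rw [← hBrank]
    refine le_trans ?_ (pc_finrank_mul_le _ _ hWfg (hBfin _))
    have := Module.Finite.iff_fg.2 (hWfg.mul (hBfin (D * m)))
    refine Submodule.finrank_mono (le_trans ?_ (key m))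
    simpa using (mul_le_mul_right hW1 (V ^ m))
  · obtain ⟨t, ht⟩ : ∃ t, ∀ i, g (MvPolynomial.X i) ∈ V ^ t := by
      choose f hf using fun i => pc_exists_mem_pow h1 hgen (g (MvPolynomial.X i))
      exact ⟨Finset.univ.sup f, fun i => pc_pow_mono h1 (Finset.le_sup (Finset.mem_univ i)) (hf i)⟩
    refine ⟨t * s, fun m => ?_⟩
    have : B m ≤ V ^ (t * s * m) := by
      simp only [hB, MvPolynomial.restrictDegree]
      rw [MvPolynomial.restrictSupport_eq_span, Submodule.map_span, Submodule.span_le]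
      rintro _ ⟨_, ⟨e, he, rfl⟩, rfl⟩
      have h2 : ∀ i, g (MvPolynomial.X i) ^ e i ∈ V ^ (t * m) := fun i => by
        refine pc_pow_mono h1 (Nat.mul_le_mul_left t (he i)) ?_
        rw [pow_mul]
        exact Submodule.pow_mem_pow _ (ht i) _
      have h3 : ∀ S : Finset (Fin s), ∏ i ∈ S, g (MvPolynomial.X i) ^ e i ∈ V ^ (t * m * S.card) := by
        intro S
        classical
        induction S using Finset.induction_on with
        | empty => simp
        | insert a S ha ih =>
          rw [Finset.prod_insert ha, Finset.card_insert_of_notMem ha, mul_add, mul_one, add_comm,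
            pow_add]
          exact Submodule.mul_mem_mul (h2 a) ih
      have h4 := h3 Finset.univ
      rw [Finset.card_univ, Fintype.card_fin] at h4
      have h5 : g (MvPolynomial.monomial e 1) = ∏ i, g (MvPolynomial.X i) ^ e i := by
        rw [MvPolynomial.monomial_eq, Finsupp.prod_fintype _ _ (by simp)]
        simp
      change g (MvPolynomial.monomial e 1) ∈ V ^ (t * s * m)
      rw [h5, mul_right_comm]
      exact h4
    have hf := Module.Finite.iff_fg.2 (hV.pow (t * s * m))
    refine le_trans ?_ (Submodule.finrank_mono this)
    rw [hBrank]
    gcongr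
    omega
end
section
variable {k A : Type*} [Field k] [CommRing A] [Algebra k A]

theorem pc_prod_mem {ι : Type*} (V : Submodule k A) (t : Finset ι) (f : ι → A)
    (hf : ∀ i ∈ t, f i ∈ V) : ∏ i ∈ t, f i ∈ V ^ t.card := by
  classical
  induction t using Finset.induction_on with
  | empty =>
    rw [Finset.prod_empty, Finset.card_empty, pow_zero]
    exact Submodule.one_le.1 le_rfl
  | insert a t ha ih =>
    rw [Finset.prod_insert ha, Finset.card_insert_of_notMem ha, pow_succ']
    exact Submodule.mul_mem_mul (hf a (by simp)) (ih fun i hi => hf i (by simp [hi]))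

theorem pc_pigeon {V U : Submodule k A} (hV : V.FG) (q : ℕ) (hq : 1 ≤ q)
    (hU : ∀ v ∈ V, v ^ q ∈ U) : ∃ c, q ≤ c ∧ ∀ n, c ≤ n → V ^ n ≤ V ^ (n - q) * U := by
  classical
  obtain ⟨S, rfl⟩ := hV
  refine ⟨S.card * (q - 1) + q, by omega, fun n hn => ?_⟩
  conv_lhs => rw [Submodule.span_pow]
  rw [Submodule.span_le]
  intro x hx
  rw [Set.mem_pow_iff_prod] at hx
  obtain ⟨f, hf, rfl⟩ := hx
  let g : Fin n → S := fun i => ⟨f i, hf i⟩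
  obtain ⟨y, hy⟩ := Fintype.exists_lt_card_fiber_of_mul_lt_card g (n := q - 1)
    (by simp only [Fintype.card_coe, Fintype.card_fin]; omega)
  set T : Finset (Fin n) := {x | g x = y} with hT
  have hyV : (y : A) ∈ Submodule.span k (S : Set A) := Submodule.subset_span y.2
  have h1 : ∏ i ∈ T, f i = (y : A) ^ T.card := by
    rw [← Finset.prod_const]
    refine Finset.prod_congr rfl fun i hi => ?_
    have : g i = y := by simpa [hT] using hi
    rw [← this]
  have h2 : T.card + Tᶜ.card = n := by simp
  rw [← Finset.prod_mul_prod_compl T f, h1]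
  have e1 : (y : A) ^ T.card = y ^ (T.card - q) * y ^ q := by rw [← pow_add]; congr 1; omega
  have e2 : n - q = (T.card - q) + Tᶜ.card := by omega
  rw [e1, e2, pow_add, mul_right_comm ((y : A) ^ _)]
  refine Submodule.mul_mem_mul (Submodule.mul_mem_mul (Submodule.pow_mem_pow _ hyV _) ?_) (hU _ hyV)
  exact pc_prod_mem _ _ _ fun i _ => Submodule.subset_span (hf i)

theorem pc_pig {V : Submodule k A} (hV : V.FG) (q : ℕ) (hq : 1 ≤ q) (L : A →ₐ[k] A)
    (hU : ∀ v ∈ V, v ^ q ∈ V * V.map L.toLinearMap) :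
    ∃ c, ∀ j, V ^ (c + (q - 1) * j) ≤ V ^ c * (V ^ j).map L.toLinearMap := by
  obtain ⟨c, hqc, hc⟩ := pc_pigeon hV q hq hU
  refine ⟨c, fun j => ?_⟩
  induction j with
  | zero =>
    rw [pow_zero, Submodule.map_one, mul_one, mul_zero, add_zero]
  | succ j ih =>
    have h := hc (c + (q - 1) * (j + 1)) (by omega)
    refine h.trans ?_
    have e : c + (q - 1) * (j + 1) - q + 1 = c + (q - 1) * j := by
      rw [mul_add, mul_one]; omega
    rw [← mul_assoc, ← pow_succ, e, pow_succ, Submodule.map_mul, ← mul_assoc]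
    exact mul_le_mul' ih le_rfl

variable {V : Submodule k A} (q : ℕ) (L : A →ₐ[k] A)

theorem pc_finite (hq : 2 ≤ q) (hV : V.FG) (h1 : 1 ≤ V)
    (hgen : Algebra.adjoin k (V : Set A) = ⊤) (c : ℕ)
    (hc : ∀ j, V ^ (c + (q - 1) * j) ≤ V ^ c * (V ^ j).map L.toLinearMap) :
    Module.Finite L.range A := by
  obtain ⟨T, hT⟩ := hV.pow c
  refine ⟨⟨T, ?_⟩⟩
  rw [← top_le_iff]
  intro a _
  obtain ⟨s, hs⟩ := pc_exists_mem_pow h1 hgen a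
  have h2 : a ∈ V ^ c * (V ^ s).map L.toLinearMap := by
    refine hc s (pc_pow_mono h1 ?_ hs)
    nlinarith [Nat.sub_add_cancel (show 1 ≤ q by omega), Nat.le_sub_one_of_lt hq,
      Nat.zero_le ((q - 1 - 1) * s), Nat.sub_add_cancel (show 1 ≤ q - 1 by omega)]
  refine Submodule.mul_induction_on h2 ?_ fun x y hx hy => add_mem hx hy
  rintro v hv _ ⟨u, _, rfl⟩
  rw [← hT] at hv
  have hv' : v ∈ Submodule.span L.range (T : Set A) :=
    Submodule.span_le_restrictScalars k L.range _ hv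
  have := Submodule.smul_mem _ (⟨L u, u, rfl⟩ : L.range) hv'
  rw [mul_comm]
  exact this

theorem pc_injective [IsDomain A] (d : ℕ) (hdim : ringKrullDim A = d) [Module.Finite L.range A] :
    Function.Injective L := by
  rw [injective_iff_map_eq_zero]
  intro a ha
  by_contra hne
  have h1 : ringKrullDim A ≤ ringKrullDim L.range := pc_krull_le_of_integral
  have h2 := ringKrullDim_succ_le_of_surjective L.rangeRestrict.toRingHom
    L.rangeRestrict_surjective (mem_nonZeroDivisors_of_ne_zero hne) (Subtype.ext ha)
  have h3 := (add_le_add_left h1 1).trans h2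
  rw [hdim] at h3
  have h4 : ((d + 1 : ℕ) : WithBot ℕ∞) ≤ (d : ℕ) := by push_cast; exact h3
  have h5 : d + 1 ≤ d := by exact_mod_cast h4
  omega

/-- rank inequality for the upper bound -/
theorem pc_upper_rank {ι : Type*} [Fintype ι] (hV : V.FG) (hLV : V.map L.toLinearMap ≤ V ^ (q + 1))
    (b : ι → A) (hb : ∀ f : ι → A, ∑ i, b i * L (f i) = 0 → f = 0) (s : ℕ)
    (hs : ∀ i, b i ∈ V ^ s) (m : ℕ) :
    Fintype.card ι * Module.finrank k ↥(V ^ m) ≤ Module.finrank k ↥(V ^ ((q + 1) * m + s)) := by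
  have (m : ℕ) : Module.Finite k ↥(V ^ m) := Module.Finite.iff_fg.2 (hV.pow _)
  let Φ₀ : (ι → ↥(V ^ m)) →ₗ[k] A := ∑ i, (LinearMap.mulLeft k (b i)) ∘ₗ L.toLinearMap ∘ₗ
    (V ^ m).subtype ∘ₗ LinearMap.proj i
  have hΦ : ∀ f, Φ₀ f = ∑ i, b i * L (f i : A) := by
    intro f; simp [Φ₀]
  have hmem : ∀ f, Φ₀ f ∈ V ^ ((q + 1) * m + s) := by
    intro f
    rw [hΦ]
    refine Submodule.sum_mem _ fun i _ => ?_
    rw [add_comm, pow_add]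
    refine Submodule.mul_mem_mul (hs i) ?_
    have h : (V ^ m).map L.toLinearMap ≤ V ^ ((q + 1) * m) := by
      rw [Submodule.map_pow, pow_mul]
      exact pow_le_pow_left' hLV m
    exact h ⟨_, (f i).2, rfl⟩
  have := LinearMap.finrank_le_finrank_of_injective (f := Φ₀.codRestrict _ hmem) (by
    rw [← LinearMap.ker_eq_bot, LinearMap.ker_codRestrict, LinearMap.ker_eq_bot']
    intro f hf
    rw [hΦ] at hf
    have := hb _ hf
    ext i
    exact congrFun this i)
  rwa [Module.finrank_pi_fintype, Finset.sum_const, Finset.card_univ, smul_eq_mul] at this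

/-- Dedekind independence -/
theorem pc_dedekind [IsDomain A] (hinj : Function.Injective L) {Γ : Type*} [Fintype Γ]
    (τ : Γ → A →ₐ[k] A) (hτ : Function.Injective τ) (hτL : ∀ g a, τ g (L a) = L a) :
    ∃ b : Fin (Fintype.card Γ) → A, ∀ f : Fin (Fintype.card Γ) → A,
      ∑ i, b i * L (f i) = 0 → f = 0 := by
  classical
  let K := FractionRing A
  let v : A → (Γ → K) := fun a g => algebraMap A K (τ g a)
  have hspan : Submodule.span K (Set.range v) = ⊤ := by
    by_contra hne
    obtain ⟨φ, hφ, hle⟩ := Submodule.exists_le_ker_of_lt_top _ (lt_top_iff_ne_top.2 hne)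
    have hφv : ∀ a, ∑ g, φ (Pi.single g 1) * algebraMap A K (τ g a) = 0 := by
      intro a
      have h := LinearMap.mem_ker.1 (hle (Submodule.subset_span ⟨a, rfl⟩))
      rw [← (Pi.basisFun K Γ).sum_repr (v a)] at h
      simp only [map_sum, map_smul, Pi.basisFun_repr, Pi.basisFun_apply, smul_eq_mul] at h
      rw [← h]
      exact Finset.sum_congr rfl fun g _ => mul_comm _ _
    have hli := linearIndependent_monoidHom A K
    let σ : Γ → (A →* K) := fun g => ((algebraMap A K : A →* K)).comp (τ g : A →* A)
    have hσ : Function.Injective σ := by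
      intro g g' h
      apply hτ
      ext a
      exact IsFractionRing.injective A K (DFunLike.congr_fun h a)
    have h2 := (Fintype.linearIndependent_iff.1 (hli.comp σ hσ)) (fun g => φ (Pi.single g 1)) (by
      funext a
      simpa [σ] using hφv a)
    apply hφ
    refine (Pi.basisFun K Γ).ext fun g => ?_
    simpa using h2 g
  obtain ⟨B, hBsub, hBspan, hBli⟩ := exists_linearIndependent K (Set.range v)
  rw [hspan] at hBspan
  let bas := Module.Basis.mk hBli (by simp [hBspan])
  have hcard : Nat.card B = Fintype.card Γ := by
    rw [← Module.finrank_eq_nat_card_basis bas, Module.finrank_fintype_fun_eq_card]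
  have hBf : Finite B := Module.Finite.finite_basis bas
  let e : Fin (Fintype.card Γ) ≃ B := (Finite.equivFinOfCardEq hcard).symm
  choose x hx using fun z : B => hBsub z.2
  refine ⟨fun i => x (e i), fun f hf => ?_⟩
  have hli : LinearIndependent K (fun i => v (x (e i))) := by
    have := hBli.comp e e.injective
    have h2 : (fun i => v (x (e i))) = Subtype.val ∘ e := funext fun i => hx _
    rw [h2]
    exact this
  rw [Fintype.linearIndependent_iff] at hli
  have h3 := hli (fun i => algebraMap A K (L (f i))) (by
    funext g
    have := congrArg (fun z => algebraMap A K (τ g z)) hf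
    simp only [map_sum, map_mul, hτL, map_zero] at this
    simpa [v, mul_comm, Algebra.smul_def] using this)
  funext i
  have h4 := h3 i
  rw [map_eq_zero_iff _ (IsFractionRing.injective A K)] at h4
  exact (map_eq_zero_iff _ hinj).1 h4
end

section
theorem pc_exp_compare (a b M : ℕ) (h : ∀ j : ℕ, a ^ j ≤ M * b ^ j) : a ≤ b := by
  by_contra! hlt
  rcases Nat.eq_zero_or_pos b with rfl | hb
  · have := h 1
    simp at this
    omega
  have hb' : (0 : ℝ) < b := by exact_mod_cast hb
  have h1 : (1 : ℝ) < a / b := by rw [one_lt_div hb']; exact_mod_cast hlt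
  obtain ⟨n, hn⟩ := pow_unbounded_of_one_lt (M : ℝ) h1
  rw [div_pow, lt_div_iff₀ (by positivity)] at hn
  have h2 : (a : ℝ) ^ n ≤ M * b ^ n := by exact_mod_cast h n
  linarith

theorem pc_num_upper (N p d C D s : ℕ) (hp : 2 ≤ p) (h : ℕ → ℕ) (h0 : 1 ≤ h 0)
    (hstep : ∀ m, N * h m ≤ h (p * m + s)) (hb : ∀ m, h m ≤ C * (D * m + 1) ^ d) :
    N ≤ p ^ d := by
  have key : ∀ j, ∃ m, m + s ≤ s * p ^ j ∧ N ^ j ≤ h m := by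
    intro j
    induction j with
    | zero => exact ⟨0, by simp, by simpa using h0⟩
    | succ j ih =>
      obtain ⟨m, hm, hN⟩ := ih
      refine ⟨p * m + s, ?_, ?_⟩
      · have := Nat.mul_le_mul_left p hm
        calc p * m + s + s = p * m + 2 * s := by ring
          _ ≤ p * m + p * s := by gcongr
          _ = p * (m + s) := by ring
          _ ≤ p * (s * p ^ j) := this
          _ = s * p ^ (j + 1) := by ring
      · calc N ^ (j + 1) = N * N ^ j := by ring
          _ ≤ N * h m := by gcongr
          _ ≤ _ := hstep m
  apply pc_exp_compare _ _ (C * (D * s + 1) ^ d)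
  intro j
  obtain ⟨m, hm, hN⟩ := key j
  have hp1 : 1 ≤ p ^ j := Nat.one_le_pow _ _ (by omega)
  calc N ^ j ≤ h m := hN
    _ ≤ C * (D * m + 1) ^ d := hb m
    _ ≤ C * (D * (s * p ^ j) + p ^ j) ^ d := by gcongr; omega
    _ = C * (D * s + 1) ^ d * (p ^ d) ^ j := by
      rw [← pow_mul, mul_comm d j, pow_mul, mul_assoc, ← mul_pow]; ring

theorem pc_num_lower (N p d c E s : ℕ) (hp : 2 ≤ p) (h : ℕ → ℕ) (hmono : Monotone h)
    (hstep : ∀ j, h (c + p * j) ≤ N * h (s + j)) (hE : ∀ m, m ^ d ≤ h (E * m)) :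
    p ^ d ≤ N := by
  have key : ∀ i, h (E * p ^ i + 2 * s) ≤ N ^ i * h (E + 2 * s) := by
    intro i
    induction i with
    | zero => simp
    | succ i ih =>
      have h1 := hstep (E * p ^ i + s)
      have h2 : E * p ^ (i + 1) + 2 * s ≤ c + p * (E * p ^ i + s) := by
        have : 2 * s ≤ p * s := by gcongr
        calc E * p ^ (i + 1) + 2 * s ≤ E * p ^ (i + 1) + p * s := by gcongr
          _ = p * (E * p ^ i + s) := by ring
          _ ≤ _ := by omega
      have e : s + (E * p ^ i + s) = E * p ^ i + 2 * s := by ring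
      rw [e] at h1
      calc h (E * p ^ (i + 1) + 2 * s) ≤ h (c + p * (E * p ^ i + s)) := hmono h2
        _ ≤ N * h (E * p ^ i + 2 * s) := h1
        _ ≤ N * (N ^ i * h (E + 2 * s)) := by gcongr
        _ = _ := by ring
  apply pc_exp_compare _ _ (h (E + 2 * s))
  intro i
  calc (p ^ d) ^ i = (p ^ i) ^ d := by rw [← pow_mul, ← pow_mul, mul_comm]
    _ ≤ h (E * p ^ i) := hE _
    _ ≤ h (E * p ^ i + 2 * s) := hmono (by omega)
    _ ≤ N ^ i * h (E + 2 * s) := key i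
    _ = _ := mul_comm _ _
end

section
variable {k : Type*} [Field k]

theorem pc_finite_hom [Finite k] (A : Type*) [CommRing A] [Algebra k A] [Algebra.FiniteType k A] :
    Finite (A →ₐ[k] k) := by
  obtain ⟨S, hS⟩ := (‹Algebra.FiniteType k A›).out
  refine Finite.of_injective (fun (g : A →ₐ[k] k) (s : S) => g s) fun g g' h => ?_
  exact AlgHom.ext_of_adjoin_eq_top hS fun s hs => congrFun h ⟨s, hs⟩

variable [Fintype k]

theorem pc_fixed_point {D : Type*} [CommRing D] [IsDomain D] [Algebra k D] (y : D)
    (hy : y ^ Fintype.card k = y) : ∃ c : k, algebraMap k D c = y := by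
  have h := FiniteField.roots_X_pow_card_sub_X k
  have hs : (Polynomial.X ^ Fintype.card k - Polynomial.X : Polynomial k).Splits := by
    rw [Polynomial.splits_iff_card_roots, h,
      FiniteField.X_pow_card_sub_X_natDegree_eq k Fintype.one_lt_card]
    rfl
  have h2 := hs.eq_prod_roots
  have h3 := congrArg (Polynomial.aeval y) h2
  have hm : (Polynomial.X ^ Fintype.card k - Polynomial.X : Polynomial k).leadingCoeff = 1 := by
    apply Polynomial.Monic.leadingCoeff
    exact Polynomial.monic_X_pow_sub (by
      rw [Polynomial.degree_X]; exact_mod_cast Fintype.one_lt_card)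
  rw [hm, h] at h3
  simp only [map_sub, map_pow, Polynomial.aeval_X, hy, sub_self, map_one, one_mul] at h3
  have h4 : ∏ c : k, (y - algebraMap k D c) = 0 := by
    rw [h3]
    change _ = Polynomial.aeval y (∏ c : k, (Polynomial.X - Polynomial.C c))
    simp [map_prod]
  obtain ⟨c, -, hc⟩ := Finset.prod_eq_zero_iff.1 h4
  exact ⟨c, (sub_eq_zero.1 hc).symm⟩

theorem pc_fixed_card (B : Type*) [CommRing B] [Algebra k B] [Algebra.FiniteType k B]
    (hB : ∀ x : B, x ^ Fintype.card k = x) :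
    Module.Finite k B ∧ Module.finrank k B ≤ Nat.card (B →ₐ[k] k) := by
  have hq : 1 < Fintype.card k := Fintype.one_lt_card
  have hInt : Algebra.IsIntegral k B := ⟨fun x => ⟨Polynomial.X ^ Fintype.card k - Polynomial.X,
    Polynomial.monic_X_pow_sub (by
      rw [Polynomial.degree_X]; exact_mod_cast Fintype.one_lt_card), by simp [hB]⟩⟩
  have hfin : Module.Finite k B := Algebra.IsIntegral.finite
  refine ⟨hfin, ?_⟩
  have hΓ : Finite (B →ₐ[k] k) := pc_finite_hom B
  have := Fintype.ofFinite (B →ₐ[k] k)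
  let Φ : B →ₗ[k] ((B →ₐ[k] k) → k) := LinearMap.pi fun g => g.toLinearMap
  have hinj : Function.Injective Φ := by
    rw [injective_iff_map_eq_zero]
    intro x hx
    by_contra hne
    have hnil : x ∉ nilradical B := by
      rintro ⟨n, hn⟩
      apply hne
      have h1 : ∀ j : ℕ, x ^ (Fintype.card k) ^ j = x := by
        intro j
        induction j with
        | zero => simp
        | succ j ih => rw [pow_succ, pow_mul, ih, hB]
      rw [← h1 n]
      exact pow_eq_zero_of_le (Nat.lt_pow_self hq).le hn
    rw [nilradical_eq_sInf, Ideal.mem_sInf] at hnil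
    push Not at hnil
    obtain ⟨p, hp, hxp⟩ := hnil
    have hp' : p.IsPrime := hp
    have hbij : Function.Bijective (Algebra.ofId k (B ⧸ p)) := by
      refine ⟨(algebraMap k (B ⧸ p)).injective, fun y => pc_fixed_point y ?_⟩
      obtain ⟨b, rfl⟩ := Ideal.Quotient.mk_surjective y
      rw [← map_pow, hB]
    let e := AlgEquiv.ofBijective _ hbij
    let g : B →ₐ[k] k := (e.symm : (B ⧸ p) →ₐ[k] k).comp (Ideal.Quotient.mkₐ k p)
    have hg : g x = 0 := congrFun hx g
    apply hxp
    have : e.symm (Ideal.Quotient.mk p x) = 0 := hg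
    rw [map_eq_zero_iff _ e.symm.injective] at this
    exact Ideal.Quotient.eq_zero_iff_mem.1 this
  have := LinearMap.finrank_le_finrank_of_injective hinj
  rwa [Module.finrank_fintype_fun_eq_card, ← Nat.card_eq_fintype_card] at this

variable {A : Type*} [CommRing A] [Algebra k A]

theorem pc_nakayama [Algebra.FiniteType k A] (L : A →ₐ[k] A) [Module.Finite L.range A]
    (ε : A →ₐ[k] k) (hε : ∀ f, ε (L f) = ε f)
    (hfr : ∀ I : Ideal A, (∀ f, ε f = 0 → L f ∈ I) →
      ∀ f, Ideal.Quotient.mkₐ k I f ^ Fintype.card k = Ideal.Quotient.mkₐ k I f) :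
    ∃ (W : Submodule k A) (h : A), W.FG ∧ Module.finrank k W ≤ Nat.card (A →ₐ[k] k) ∧ h ≠ 0 ∧
      ∀ a, h * a ∈ Submodule.span L.range (W : Set A) := by
  let m : Ideal L.range := RingHom.ker (ε.comp L.range.val)
  let I : Ideal A := m.map (algebraMap L.range A)
  let π := Ideal.Quotient.mkₐ k I
  have hπ : Function.Surjective π := Ideal.Quotient.mkₐ_surjective k I
  have hfixed : ∀ x : A ⧸ I, x ^ Fintype.card k = x := by
    intro x
    obtain ⟨f, rfl⟩ := hπ x
    refine hfr I (fun f hf => ?_) f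
    have h1 : (⟨L f, f, rfl⟩ : L.range) ∈ m := by
      change ε (L f) = 0
      rw [hε, hf]
    exact Ideal.mem_map_of_mem (algebraMap L.range A) h1
  obtain ⟨hfin, hcard⟩ := pc_fixed_card (k := k) (A ⧸ I) hfixed
  have hΓ : Finite (A →ₐ[k] k) := pc_finite_hom A
  have hcard2 : Nat.card ((A ⧸ I) →ₐ[k] k) ≤ Nat.card (A →ₐ[k] k) :=
    Nat.card_le_card_of_injective (fun g => g.comp π) fun g g' h =>
      AlgHom.cancel_right hπ |>.1 h
  let bas := Module.finBasis k (A ⧸ I)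
  choose b hb using fun i => hπ (bas i)
  let W := Submodule.span k (Set.range b)
  have hspan : ∀ a : A, ∃ w ∈ W, a - w ∈ I := by
    intro a
    refine ⟨∑ i, bas.repr (π a) i • b i, Submodule.sum_mem _ fun i _ => Submodule.smul_mem _ _
      (Submodule.subset_span ⟨i, rfl⟩), ?_⟩
    rw [← Ideal.Quotient.eq_zero_iff_mem]
    change π _ = 0
    rw [map_sub, map_sum, sub_eq_zero]
    simp only [map_smul, hb]
    exact (bas.sum_repr _).symm
  obtain ⟨r, hr, hle⟩ := Submodule.exists_sub_one_mem_and_smul_le_of_fg_of_le_sup (I := m)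
    (N := Submodule.span L.range (W : Set A)) (N' := ⊤) (P := ⊤) Module.Finite.fg_top le_top (by
      rw [Ideal.smul_top_eq_map]
      intro a _
      obtain ⟨w, hw, haw⟩ := hspan a
      rw [← add_sub_cancel w a]
      exact Submodule.add_mem_sup (Submodule.subset_span hw) haw)
  refine ⟨W, (r : A), Submodule.fg_span (Set.finite_range _), ?_, ?_, ?_⟩
  · refine (finrank_range_le_card b).trans ?_
    rw [Fintype.card_fin]
    exact hcard.trans hcard2
  · intro h0
    have h1 : ε ((r - 1 : L.range) : A) = 0 := hr
    simp [h0] at h1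
  · intro a
    exact hle (Submodule.smul_mem_pointwise_smul a r ⊤ trivial)

theorem pc_lower_rank [IsDomain A] (q : ℕ) (V : Submodule k A) (L : A →ₐ[k] A) (hV : V.FG)
    (h1 : 1 ≤ V) (hgen : Algebra.adjoin k (V : Set A) = ⊤) (c : ℕ)
    (hc : ∀ j, V ^ (c + (q - 1) * j) ≤ V ^ c * (V ^ j).map L.toLinearMap)
    (W : Submodule k A) (h : A) (hW : W.FG) (h0 : h ≠ 0)
    (hh : ∀ a, h * a ∈ Submodule.span L.range (W : Set A)) :
    ∃ s, ∀ j, Module.finrank k ↥(V ^ (c + (q - 1) * j)) ≤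
      Module.finrank k W * Module.finrank k ↥(V ^ (s + j)) := by
  have (m : ℕ) : Module.Finite k ↥(V ^ m) := Module.Finite.iff_fg.2 (hV.pow _)
  have hLfg (m : ℕ) : ((V ^ m).map L.toLinearMap).FG := (hV.pow _).map _
  let B : ℕ → Submodule k A := fun s => W * (V ^ s).map L.toLinearMap
  have hBmono : Monotone B := fun s t hst =>
    mul_le_mul' le_rfl (Submodule.map_mono (pc_pow_mono h1 hst))
  have hBmul : ∀ s t, B s * (V ^ t).map L.toLinearMap = B (s + t) := by
    intro s t
    simp only [B]
    rw [mul_assoc, ← Submodule.map_mul, pow_add]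
  let μ := LinearMap.mulLeft k h
  obtain ⟨s, hs⟩ := pc_fg_le (B := fun s => (B s).comap μ)
    (fun s t hst => Submodule.comap_mono (hBmono hst)) (fun a => by
      change ∃ s, h * a ∈ B s
      refine Submodule.span_induction (p := fun x _ => ∃ s, x ∈ B s) ?_ ?_ ?_ ?_ (hh a)
      · intro x hx
        refine ⟨0, ?_⟩
        rw [← mul_one x]
        exact Submodule.mul_mem_mul hx ⟨1, Submodule.one_le.1 (by simp), map_one L⟩
      · exact ⟨0, zero_mem _⟩
      · rintro x y _ _ ⟨s, hs⟩ ⟨t, ht⟩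
        exact ⟨max s t, add_mem (hBmono (le_max_left _ _) hs) (hBmono (le_max_right _ _) ht)⟩
      · rintro ⟨_, u, rfl⟩ x _ ⟨s, hs⟩
        obtain ⟨t, ht⟩ := pc_exists_mem_pow h1 hgen u
        refine ⟨s + t, ?_⟩
        rw [← hBmul]
        have := Submodule.mul_mem_mul hs (Submodule.mem_map_of_mem (f := L.toLinearMap) ht)
        rw [mul_comm x] at this
        exact this) (hV.pow c)
  refine ⟨s, fun j => ?_⟩
  have hμ : Function.Injective μ := fun a b hab => mul_left_cancel₀ h0 hab
  have hle : (V ^ (c + (q - 1) * j)).map μ ≤ B (s + j) := by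
    rw [← hBmul]
    refine (Submodule.map_mono (hc j)).trans ?_
    rw [Submodule.map_le_iff_le_comap]
    refine Submodule.mul_le.2 fun v hv u hu => ?_
    change h * (v * u) ∈ B s * (V ^ j).map L.toLinearMap
    rw [← mul_assoc]
    exact Submodule.mul_mem_mul (hs hv) hu
  have hBfg : (B (s + j)).FG := hW.mul (hLfg _)
  have := Module.Finite.iff_fg.2 hBfg
  calc Module.finrank k ↥(V ^ (c + (q - 1) * j))
      = Module.finrank k ↥((V ^ (c + (q - 1) * j)).map μ) :=
        (Submodule.equivMapOfInjective μ hμ _).finrank_eq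
    _ ≤ Module.finrank k ↥(B (s + j)) := Submodule.finrank_mono hle
    _ ≤ Module.finrank k W * Module.finrank k ↥((V ^ (s + j)).map L.toLinearMap) :=
        pc_finrank_mul_le _ _ hW (hLfg _)
    _ ≤ _ := Nat.mul_le_mul_left _ (Submodule.finrank_map_le _ _)
end


section
variable {K H : Type*} [Field K] [IsAlgClosed K] [CommRing H]

theorem pc_nullst [Algebra K H] [Algebra.FiniteType K H] (P : Ideal H) [hP : P.IsPrime] (f : H)
    (hf : f ∉ P) : ∃ x : H →ₐ[K] K, P ≤ RingHom.ker x ∧ x f ≠ 0 := by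
  have hJ : IsJacobsonRing H := isJacobsonRing_of_finiteType (A := K)
  have h1 : P.jacobson = P := hJ.out hP.isRadical
  rw [← h1, Ideal.jacobson, Ideal.mem_sInf] at hf
  push Not at hf
  obtain ⟨m, ⟨hPm, hm⟩, hfm⟩ := hf
  let := Ideal.Quotient.field m
  have hfin : Module.Finite K (H ⧸ m) := finite_of_finite_type_of_isJacobsonRing K (H ⧸ m)
  have hbij := IsAlgClosed.algebraMap_bijective_of_isIntegral (k := K) (K := H ⧸ m)
  let e : K ≃ₐ[K] (H ⧸ m) := AlgEquiv.ofBijective (Algebra.ofId K (H ⧸ m)) hbij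
  have key : ∀ a : H, ((e.symm : (H ⧸ m) →ₐ[K] K).comp (Ideal.Quotient.mkₐ K m)) a = 0 ↔ a ∈ m := by
    intro a
    simp [Ideal.Quotient.eq_zero_iff_mem]
  refine ⟨(e.symm : (H ⧸ m) →ₐ[K] K).comp (Ideal.Quotient.mkₐ K m), fun a ha => ?_, fun h => ?_⟩
  · exact (key a).2 (hPm ha)
  · exact hfm ((key f).1 h)

open WithConv

theorem pc_trans_left {k A : Type*} [Field k] [CommRing A] [HopfAlgebra k A]
    (x : WithConv (A →ₐ[k] k)) : ∃ T : A →ₐ[k] A, ∀ y : WithConv (A →ₐ[k] k),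
      y.ofConv.comp T = (x * y).ofConv := by
  refine ⟨(toConv ((Algebra.ofId k A).comp x.ofConv) * toConv (AlgHom.id k A)).ofConv, fun y => ?_⟩
  rw [AlgHom.comp_convMul_distrib]
  congr 2
  ext a
  simp [Algebra.ofId_apply]

theorem pc_trans_right {k A : Type*} [Field k] [CommRing A] [HopfAlgebra k A]
    (x : WithConv (A →ₐ[k] k)) : ∃ T : A →ₐ[k] A, ∀ y : WithConv (A →ₐ[k] k),
      y.ofConv.comp T = (y * x).ofConv := by
  refine ⟨(toConv (AlgHom.id k A) * toConv ((Algebra.ofId k A).comp x.ofConv)).ofConv, fun y => ?_⟩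
  rw [AlgHom.comp_convMul_distrib]
  congr 2
  ext a
  simp [Algebra.ofId_apply]

theorem pc_unique_min [HopfAlgebra K H] [Algebra.FiniteType K H] (P Q : Ideal H)
    (hP : P ∈ minimalPrimes H) (hQ : Q ∈ minimalPrimes H) (g : H →ₐ[K] K)
    (hPg : P ≤ RingHom.ker g) (hQg : Q ≤ RingHom.ker g) : P = Q := by
  have hPp : P.IsPrime := hP.1.1
  have hQp : Q.IsPrime := hQ.1.1
  let G := WithConv (H →ₐ[K] K)
  let g' : G := toConv g
  let J : Ideal H := ⨅ x : {x : G // P ≤ RingHom.ker x.ofConv},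
    ⨅ y : {y : G // Q ≤ RingHom.ker y.ofConv}, RingHom.ker ((x.1 * g'⁻¹ * y.1 : G).ofConv)
  have memJ : ∀ f, f ∈ J ↔ ∀ x y : G, P ≤ RingHom.ker x.ofConv → Q ≤ RingHom.ker y.ofConv →
      (x * g'⁻¹ * y : G).ofConv f = 0 := by
    intro f
    simp only [J, Ideal.mem_iInf, RingHom.mem_ker, Subtype.forall]
    exact ⟨fun h x y hx hy => h x hx y hy, fun h x hx y hy => h x y hx hy⟩
  have hJP : J ≤ P := by
    intro f hf
    by_contra hfP
    obtain ⟨x, hx, hxf⟩ := pc_nullst (K := K) P f hfP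
    apply hxf
    have := (memJ f).1 hf (toConv x) g' hx hQg
    have e : (toConv x * g'⁻¹ * g' : WithConv (H →ₐ[K] K)) = toConv x := inv_mul_cancel_right _ _
    rw [e] at this
    exact this
  have hJQ : J ≤ Q := by
    intro f hf
    by_contra hfP
    obtain ⟨x, hx, hxf⟩ := pc_nullst (K := K) Q f hfP
    apply hxf
    have := (memJ f).1 hf g' (toConv x) hPg hx
    have e : (g' * g'⁻¹ * toConv x : WithConv (H →ₐ[K] K)) = toConv x := by
      rw [mul_inv_cancel, one_mul]
    rw [e] at this
    exact this
  have hJprime : J.IsPrime := by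
    refine ⟨fun h => hPp.ne_top (top_le_iff.1 (h ▸ hJP)), ?_⟩
    intro a b hab
    by_contra! hc
    obtain ⟨ha, hb⟩ := hc
    rw [memJ] at ha hb
    push Not at ha hb
    obtain ⟨x1, y1, hx1, hy1, h1⟩ := ha
    obtain ⟨x2, y2, hx2, hy2, h2⟩ := hb
    obtain ⟨T1, hT1⟩ := pc_trans_right (g'⁻¹ * y1)
    obtain ⟨T2, hT2⟩ := pc_trans_right (g'⁻¹ * y2)
    have n1 : T1 a ∉ P := fun h => h1 (by
      rw [mul_assoc, ← hT1]; exact hx1 h)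
    have n2 : T2 b ∉ P := fun h => h2 (by
      rw [mul_assoc, ← hT2]; exact hx2 h)
    have n3 : T1 a * T2 b ∉ P := fun h => (hPp.mem_or_mem h).elim n1 n2
    obtain ⟨x, hx, hxf⟩ := pc_nullst (K := K) P _ n3
    rw [map_mul] at hxf
    obtain ⟨T, hT⟩ := pc_trans_left (toConv x * g'⁻¹)
    have e1 : x (T1 a) = y1.ofConv (T a) := by
      have e := (hT1 (toConv x)).trans ((congrArg ofConv (mul_assoc _ _ _).symm).trans (hT y1).symm)
      exact DFunLike.congr_fun e a
    have e2 : x (T2 b) = y2.ofConv (T b) := by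
      have e := (hT2 (toConv x)).trans ((congrArg ofConv (mul_assoc _ _ _).symm).trans (hT y2).symm)
      exact DFunLike.congr_fun e b
    have m1 : T a ∉ Q := fun h => left_ne_zero_of_mul hxf (e1.trans (hy1 h))
    have m2 : T b ∉ Q := fun h => right_ne_zero_of_mul hxf (e2.trans (hy2 h))
    have m3 : T a * T b ∉ Q := fun h => (hQp.mem_or_mem h).elim m1 m2
    obtain ⟨y, hy, hyf⟩ := pc_nullst (K := K) Q _ m3
    apply hyf
    rw [← map_mul]
    have := (memJ _).1 hab (toConv x) (toConv y) hx hy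
    rw [← hT] at this
    exact this
  have h1 : P ≤ J := hP.2 ⟨hJprime, bot_le⟩ hJP
  have h2 : Q ≤ J := hQ.2 ⟨hJprime, bot_le⟩ hJQ
  exact le_antisymm (h1.trans hJQ) (h2.trans hJP)

/-- A Hopf algebra of finite type over an algebraically closed field with connected spectrum has
prime nilradical. -/
theorem pc_nilradical_prime [HopfAlgebra K H] [Algebra.FiniteType K H]
    (hconn : ∀ s : Set (PrimeSpectrum H), IsClopen s → s.Nonempty → s = Set.univ) :
    (nilradical H).IsPrime := by
  have hnt : Nontrivial H := (Bialgebra.counitAlgHom K H).toRingHom.domain_nontrivial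
  have hN : IsNoetherianRing H := Algebra.FiniteType.isNoetherianRing K H
  have hfin : (minimalPrimes H).Finite := minimalPrimes.finite_of_isNoetherianRing H
  obtain ⟨M, hM⟩ := Ideal.exists_maximal H
  obtain ⟨P0, hP0, hP0'⟩ := Ideal.exists_minimalPrimes_le (I := (⊥ : Ideal H)) (J := M) bot_le
  have hP0p : P0.IsPrime := hP0.1.1
  have hcl : IsClopen (PrimeSpectrum.zeroLocus (P0 : Set H)) := by
    refine ⟨PrimeSpectrum.isClosed_zeroLocus _, ?_⟩
    have : PrimeSpectrum.zeroLocus (P0 : Set H) =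
        (⋃ Q ∈ minimalPrimes H \ {P0}, PrimeSpectrum.zeroLocus (Q : Set H))ᶜ := by
      ext p
      simp only [Set.mem_compl_iff, Set.mem_iUnion, not_exists, PrimeSpectrum.mem_zeroLocus,
        SetLike.coe_subset_coe, Set.mem_sdiff, Set.mem_singleton_iff]
      constructor
      · rintro hp Q ⟨hQ, hne⟩ hQp
        obtain ⟨m, hm, hpm⟩ := Ideal.exists_le_maximal p.asIdeal p.isPrime.ne_top
        have hmp := hm.isPrime
        obtain ⟨x, hx, -⟩ := pc_nullst (K := K) m 1 ((Ideal.ne_top_iff_one m).1 hm.ne_top)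
        exact hne (pc_unique_min Q P0 hQ hP0 x ((hQp.trans hpm).trans hx) ((hp.trans hpm).trans hx))
      · intro h
        obtain ⟨Q, hQ, hQp⟩ := Ideal.exists_minimalPrimes_le (I := (⊥ : Ideal H)) (J := p.asIdeal)
          bot_le
        by_cases e : Q = P0
        · exact e ▸ hQp
        · exact absurd hQp (h Q ⟨hQ, e⟩)
    rw [this, isOpen_compl_iff]
    exact (hfin.subset Set.sdiff_subset).isClosed_biUnion
      fun Q _ => PrimeSpectrum.isClosed_zeroLocus _
  have huniv := hconn _ hcl ⟨⟨P0, hP0p⟩, by simp [PrimeSpectrum.mem_zeroLocus]⟩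
  have : nilradical H = P0 := by
    apply le_antisymm
    · exact nilradical_le_prime P0
    · rw [nilradical_eq_sInf]
      refine le_sInf fun p hp => ?_
      have : (⟨p, hp⟩ : PrimeSpectrum H) ∈ PrimeSpectrum.zeroLocus (P0 : Set H) :=
        huniv ▸ trivial
      simpa [PrimeSpectrum.mem_zeroLocus] using this
  rw [this]; exact hP0p
end

open TensorProduct in
theorem pc_isDomain {k A : Type*} [Field k] [CommRing A] [HopfAlgebra k A]
    [Algebra.FiniteType k A] [IsReduced A]
    (hconn : ∀ e : A, IsIdempotentElem e → e = 0 ∨ e = 1) : IsDomain A := by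
  have hnt : Nontrivial A := (Bialgebra.counitAlgHom k A).toRingHom.domain_nontrivial
  let K := AlgebraicClosure k
  let ι : A →ₐ[k] K ⊗[k] A := Algebra.TensorProduct.includeRight
  have hιinj : Function.Injective ι := Algebra.TensorProduct.includeRight_injective
    (algebraMap k K).injective
  have hιint : ι.toRingHom.IsIntegral := by
    have h : (algebraMap A (A ⊗[k] K)).IsIntegral := algebraMap_isIntegral_iff.2 inferInstance
    have h2 := RingHom.IsIntegral.trans _ ((Algebra.TensorProduct.comm k A K : A ⊗[k] K →+* K ⊗[k] A)) h
      (RingHom.isIntegral_of_surjective _ (Algebra.TensorProduct.comm k A K).surjective)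
    exact h2
  let φ := PrimeSpectrum.comap ι.toRingHom
  have hclosed : IsClosedMap φ := PrimeSpectrum.isClosedMap_comap_of_isIntegral _ hιint
  have hopen : IsOpenMap φ := by
    have h := PrimeSpectrum.isOpenMap_comap_algebraMap_tensorProduct_of_field
      (K := k) (A := A) (B := K)
    let e : PrimeSpectrum (K ⊗[k] A) ≃ₜ PrimeSpectrum (A ⊗[k] K) :=
      PrimeSpectrum.homeomorphOfRingEquiv (Algebra.TensorProduct.comm k K A).toRingEquiv
    have h2 : φ = PrimeSpectrum.comap (algebraMap A (A ⊗[k] K)) ∘ e := by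
      funext p
      ext a
      simp [φ, e, PrimeSpectrum.homeomorphOfRingEquiv, ι]
    rw [h2]
    exact h.comp e.isOpenMap
  have hAconn : ∀ s : Set (PrimeSpectrum A), IsClopen s → s.Nonempty → s = Set.univ := by
    intro s hs hne
    obtain ⟨e, he, rfl⟩ := PrimeSpectrum.isClopen_iff.1 hs
    rcases hconn e he with rfl | rfl
    · simp at hne
    · simp
  let ε := Bialgebra.counitAlgHom k A
  let pt : PrimeSpectrum A := ⟨RingHom.ker ε, RingHom.ker_isPrime _⟩
  let εK : K ⊗[k] A →ₐ[K] K := Algebra.TensorProduct.lift (AlgHom.id K K)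
    ((Algebra.ofId k K).comp ε) (fun _ _ => .all _ _)
  have hfiber : ∀ p : PrimeSpectrum (K ⊗[k] A), φ p = pt → p.asIdeal = RingHom.ker εK := by
    intro p hp
    have hmax : (RingHom.ker εK).IsMaximal := RingHom.ker_isMaximal_of_surjective _
      (fun c => ⟨algebraMap K _ c, εK.commutes c⟩)
    refine (hmax.eq_of_le p.isPrime.ne_top ?_).symm
    have h1 : ∀ t : K ⊗[k] A, t - algebraMap K _ (εK t) ∈ p.asIdeal := by
      intro t
      induction t using TensorProduct.induction_on with
      | zero => simp
      | add x y hx hy =>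
        have := add_mem hx hy
        rw [map_add, map_add]
        convert this using 1; ring
      | tmul c a =>
        have h3 : a - algebraMap k A (ε a) ∈ (φ p).asIdeal := by
          rw [hp]
          simp [pt, RingHom.mem_ker, ε]
        have h4 : ι (a - algebraMap k A (ε a)) ∈ p.asIdeal := h3
        have h5 := p.asIdeal.mul_mem_left (c ⊗ₜ[k] (1 : A)) h4
        convert h5 using 1
        rw [map_sub, mul_sub]
        congr 1
        · simp [ι]
        · simp [ι, εK, Algebra.TensorProduct.algebraMap_apply, Algebra.ofId_apply,
            Algebra.algebraMap_eq_smul_one, TensorProduct.smul_tmul', Algebra.TensorProduct.one_def]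
    intro t ht
    have := h1 t
    rw [(RingHom.mem_ker).1 ht] at this
    simpa using this
  have hconnK : ∀ s : Set (PrimeSpectrum (K ⊗[k] A)), IsClopen s → s.Nonempty → s = Set.univ := by
    intro s hs hne
    by_contra hsu
    have hne' : sᶜ.Nonempty := Set.nonempty_compl.2 hsu
    have i1 := hAconn (Set.image φ s) ⟨hclosed _ hs.1, hopen _ hs.2⟩ (hne.image _)
    have i2 := hAconn (Set.image φ sᶜ) ⟨hclosed _ hs.compl.1, hopen _ hs.compl.2⟩ (hne'.image _)
    obtain ⟨x, hx, hx'⟩ : pt ∈ Set.image φ s := i1 ▸ trivial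
    obtain ⟨y, hy, hy'⟩ : pt ∈ Set.image φ sᶜ := i2 ▸ trivial
    have : x = y := PrimeSpectrum.ext ((hfiber x hx').trans (hfiber y hy').symm)
    exact hy (this ▸ hx)
  have hprime := pc_nilradical_prime (K := K) (H := K ⊗[k] A) hconnK
  have nz : ∀ a : A, ι a ∈ nilradical (K ⊗[k] A) → a = 0 := by
    intro a ha
    rw [mem_nilradical] at ha
    exact ((IsNilpotent.map_iff hιinj).1 ha).eq_zero
  have : NoZeroDivisors A := ⟨fun {a b} hab => by
    have : ι a * ι b ∈ nilradical (K ⊗[k] A) := by rw [← map_mul, hab, map_zero]; exact zero_mem _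
    exact (hprime.mem_or_mem this).imp (nz a) (nz b)⟩
  exact NoZeroDivisors.to_isDomain A

section
open TensorProduct Coalgebra

variable {k A : Type*} [Field k] [CommRing A] [HopfAlgebra k A]

/-- right contraction by a functional -/
noncomputable def pcR (φ : A →ₗ[k] k) : A →ₗ[k] A :=
  (TensorProduct.rid k A).toLinearMap ∘ₗ φ.lTensor A ∘ₗ comul

theorem pcR_counit (f : A) : pcR (counit : A →ₗ[k] k) f = f := by
  simp [pcR]

theorem pcR_pcR (φ ψ : A →ₗ[k] k) (f : A) : ∃ χ : A →ₗ[k] k, pcR ψ (pcR φ f) = pcR χ f := by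
  refine ⟨(TensorProduct.lid k k).toLinearMap ∘ₗ TensorProduct.map ψ φ ∘ₗ comul, ?_⟩
  have h1 : ∀ t : A ⊗[k] A, pcR ψ (TensorProduct.rid k A (φ.lTensor A t)) =
      TensorProduct.rid k A (((TensorProduct.lid k k).toLinearMap ∘ₗ TensorProduct.map ψ φ).lTensor A
        (TensorProduct.assoc k A A A (comul.rTensor A t))) := by
    intro t
    induction t using TensorProduct.induction_on with
    | zero => simp
    | add x y hx hy => simp only [map_add, hx, hy]
    | tmul a b =>
      simp only [LinearMap.lTensor_tmul, rid_tmul, map_smul, LinearMap.rTensor_tmul]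
      simp only [pcR, LinearMap.comp_apply, LinearEquiv.coe_coe]
      generalize (comul a : A ⊗[k] A) = u
      induction u using TensorProduct.induction_on with
      | zero => simp
      | add x y hx hy => simp only [map_add, smul_add, add_tmul, hx, hy]
      | tmul c d => simp [smul_smul, mul_comm]
  have h2 := h1 (comul f)
  rw [Coalgebra.coassoc_apply] at h2
  simp only [pcR, LinearMap.comp_apply, LinearEquiv.coe_coe, LinearMap.lTensor_comp] at h2 ⊢
  exact h2

theorem pc_mem_tensor (W : Submodule k A) (t : A ⊗[k] A)
    (h : ∀ φ : A →ₗ[k] k, TensorProduct.rid k A (φ.lTensor A t) ∈ W) {n : ℕ}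
    (w : Module.Basis (Fin n) k W) : ∃ a : Fin n → A, t = ∑ i, (w i : A) ⊗ₜ[k] a i := by
  classical
  let b := Module.Free.chooseBasis k A
  obtain ⟨c, hc⟩ := TensorProduct.eq_repr_basis_right b t
  have hcW : ∀ α, c α ∈ W := by
    intro α
    have := h (b.coord α)
    rw [← hc] at this
    simp [Finsupp.sum, Finsupp.single_apply] at this
    split_ifs at this with h0
    · rw [h0]; exact this
    · exact this
  refine ⟨fun i => c.sum fun α _ => w.repr ⟨c α, hcW α⟩ i • b α, ?_⟩
  rw [← hc]
  simp only [Finsupp.sum, tmul_sum]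
  rw [Finset.sum_comm]
  refine Finset.sum_congr rfl fun α _ => ?_
  simp only [tmul_smul]
  simp only [smul_tmul', ← sum_tmul]
  congr 1
  have := congrArg Subtype.val (w.sum_repr ⟨c α, hcW α⟩)
  rw [Submodule.coe_sum] at this
  exact this.symm

theorem pc_range_pcR (f : A) : ∃ W : Submodule k A, W.FG ∧ f ∈ W ∧
    ∀ φ : A →ₗ[k] k, ∀ x ∈ W, pcR φ x ∈ W := by
  classical
  let T : (A →ₗ[k] k) →ₗ[k] A :=
    { toFun := fun φ => pcR φ f
      map_add' := fun φ ψ => by simp [pcR, LinearMap.lTensor_add]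
      map_smul' := fun c φ => by simp [pcR, LinearMap.lTensor_smul] }
  refine ⟨LinearMap.range T, ?_, ⟨counit, pcR_counit f⟩, ?_⟩
  · obtain ⟨S, hS⟩ := TensorProduct.exists_finset (comul f : A ⊗[k] A)
    have : LinearMap.range T ≤ Submodule.span k ((S.image Prod.fst : Finset A) : Set A) := by
      rintro _ ⟨φ, rfl⟩
      simp only [T, LinearMap.coe_mk, AddHom.coe_mk, pcR, LinearMap.comp_apply, hS, map_sum,
        LinearMap.lTensor_tmul, LinearEquiv.coe_coe, rid_tmul]
      refine Submodule.sum_mem _ fun i hi => Submodule.smul_mem _ _ (Submodule.subset_span ?_)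
      exact Finset.mem_coe.2 (Finset.mem_image_of_mem _ hi)
    exact Submodule.FG.of_le ⟨_, rfl⟩ this
  · rintro φ _ ⟨ψ, rfl⟩
    obtain ⟨χ, hχ⟩ := pcR_pcR ψ φ f
    exact ⟨χ, hχ.symm⟩

theorem pc_matrix [Algebra.FiniteType k A] : ∃ (n : ℕ) (X : Matrix (Fin n) (Fin n) A),
    (∀ i j, (comul (X i j) : A ⊗[k] A) = ∑ l, X i l ⊗ₜ[k] X l j) ∧
    (∀ i j, counit (R := k) (X i j) = if i = j then 1 else 0) ∧
    Algebra.adjoin k (Set.range fun p : Fin n × Fin n => X p.1 p.2) = ⊤ := by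
  classical
  obtain ⟨S, hS⟩ := (‹Algebra.FiniteType k A›).out
  choose Wf hfg hmem hst using pc_range_pcR (k := k) (A := A)
  let W : Submodule k A := ⨆ f ∈ S, Wf f
  have hWfg : W.FG := Submodule.fg_biSup S _ fun f _ => hfg f
  have hWst : ∀ φ : A →ₗ[k] k, ∀ x ∈ W, pcR φ x ∈ W := by
    intro φ
    change W ≤ W.comap (pcR φ)
    refine iSup₂_le fun f hf x hx => ?_
    exact (le_iSup₂_of_le f hf le_rfl : Wf f ≤ W) (hst f φ x hx)
  have hfin : Module.Finite k W := Module.Finite.iff_fg.2 hWfg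
  let w := Module.finBasis k W
  choose a ha using fun j => pc_mem_tensor W (comul (w j : A)) (fun φ => hWst φ _ (w j).2) w
  choose φ hφ using fun l => (w.coord l).exists_extend
  have hφw : ∀ l i, φ l (w i : A) = if i = l then 1 else 0 := by
    intro l i
    have := DFunLike.congr_fun (hφ l) (w i)
    simpa [Finsupp.single_apply] using this
  refine ⟨_, Matrix.of fun i j => a j i, ?_, ?_, ?_⟩
  · intro l j
    have h := Coalgebra.coassoc_apply (R := k) (w j : A)
    rw [ha j] at h
    simp only [map_sum, LinearMap.rTensor_tmul, LinearMap.lTensor_tmul] at h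
    simp only [ha, sum_tmul, map_sum, assoc_tmul] at h
    have h2 := congrArg (fun t => TensorProduct.lid k _ ((φ l).rTensor (A ⊗[k] A) t)) h
    simp only [map_sum, LinearMap.rTensor_tmul, hφw, lid_tmul, ite_smul, one_smul, zero_smul,
      Finset.sum_ite_eq', Finset.mem_univ, if_true] at h2
    simpa using h2.symm
  · intro l j
    have h := Coalgebra.lTensor_counit_comul (R := k) (w j : A)
    rw [ha j] at h
    have h2 := congrArg (φ l) (congrArg (TensorProduct.rid k A) h)
    simp only [map_sum, LinearMap.lTensor_tmul, rid_tmul, one_smul, map_smul, hφw, smul_eq_mul,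
      mul_ite, mul_one, mul_zero, Finset.sum_ite_eq', Finset.mem_univ, if_true] at h2
    simpa [eq_comm] using h2
  · rw [← top_le_iff, ← hS]
    refine Algebra.adjoin_le fun f hf => ?_
    have hW : W ≤ Subalgebra.toSubmodule (Algebra.adjoin k (Set.range fun p : Fin _ × Fin _ =>
        (Matrix.of fun i j => a j i : Matrix _ _ A) p.1 p.2)) := by
      intro x hx
      have hx' := w.sum_repr ⟨x, hx⟩
      have hx2 : ∑ i, w.repr ⟨x, hx⟩ i • (w i : A) = x := by
        have := congrArg Subtype.val hx'
        rw [Submodule.coe_sum] at this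
        exact this
      rw [← hx2]
      refine Submodule.sum_mem _ fun j _ => Submodule.smul_mem _ _ ?_
      have h := Coalgebra.rTensor_counit_comul (R := k) (w j : A)
      rw [ha j] at h
      have h2 := congrArg (TensorProduct.lid k A) h
      simp only [map_sum, LinearMap.rTensor_tmul, lid_tmul, one_smul] at h2
      rw [← h2]
      refine Submodule.sum_mem _ fun i _ => Submodule.smul_mem _ _ ?_
      exact Algebra.subset_adjoin ⟨(i, j), rfl⟩
    exact hW ((le_iSup₂_of_le f hf le_rfl : Wf f ≤ W) (hmem f))
end

section
open TensorProduct Coalgebra WithConv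

variable {k A : Type*} [Field k] [CommRing A] [HopfAlgebra k A]

theorem pc_comp_mul {B C : Type*} [CommRing B] [Algebra k B] [CommRing C] [Algebra k C]
    (h : B →ₐ[k] C) (f g : A →ₐ[k] B) :
    h.comp (toConv f * toConv g).ofConv = (toConv (h.comp f) * toConv (h.comp g)).ofConv := by
  rw [AlgHom.comp_convMul_distrib]

variable [Fintype k]

theorem pc_frob_comm {B C : Type*} [CommRing B] [Algebra k B] [CommRing C] [Algebra k C]
    (h : B →ₐ[k] C) : h.comp (FiniteField.frobeniusAlgHom k B) =
      (FiniteField.frobeniusAlgHom k C).comp h := by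
  ext x; simp

theorem pc_lang_exists : ∃ L : A →ₐ[k] A, (toConv (AlgHom.id k A) * toConv L).ofConv =
    FiniteField.frobeniusAlgHom k A ∧
    L = (toConv (HopfAlgebra.antipodeAlgHom k A) *
      toConv (FiniteField.frobeniusAlgHom k A)).ofConv := by
  refine ⟨_, ?_, rfl⟩
  rw [toConv_ofConv, ← mul_assoc]
  have : (toConv (AlgHom.id k A) * toConv (HopfAlgebra.antipodeAlgHom k A) :
    WithConv (A →ₐ[k] A)) = 1 := by
    have := mul_inv_cancel (toConv (AlgHom.id k A))
    exact this
  rw [this, one_mul]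

theorem pc_lang_trans (L : A →ₐ[k] A)
    (hL : (toConv (AlgHom.id k A) * toConv L).ofConv = FiniteField.frobeniusAlgHom k A) (g : A →ₐ[k] k) : ∃ τ : A →ₐ[k] A, τ.comp L = L ∧
    (Bialgebra.counitAlgHom k A).comp τ = g := by
  let γ : A →ₐ[k] A := (Algebra.ofId k A).comp g
  refine ⟨(toConv γ * toConv (AlgHom.id k A)).ofConv, ?_, ?_⟩
  · set τ := (toConv γ * toConv (AlgHom.id k A)).ofConv with hτ
    have h1 := congrArg (τ.comp ·) hL
    beta_reduce at h1
    rw [pc_comp_mul, AlgHom.comp_id, pc_frob_comm] at h1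
    conv_rhs at h1 => rw [hτ]
    rw [pc_comp_mul, AlgHom.comp_id] at h1
    have h2 : (FiniteField.frobeniusAlgHom k A).comp γ = γ := by
      rw [← pc_frob_comm]
      ext x
      have : g (x ^ Fintype.card k) = g x := by rw [map_pow, FiniteField.pow_card]
      simp [γ, Algebra.ofId_apply, -map_pow, this]
    rw [h2, ← hL, toConv_ofConv, ← mul_assoc] at h1
    have h3 : toConv τ * toConv (τ.comp L) = toConv τ * toConv L := ofConv_injective h1
    exact toConv_injective (mul_left_cancel h3)
  · rw [pc_comp_mul, AlgHom.comp_id]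
    have h1 : (Bialgebra.counitAlgHom k A).comp γ = g := by
      ext x; simp [γ, Algebra.ofId_apply]
    have h2 : (toConv (Bialgebra.counitAlgHom k A)) = (1 : WithConv (A →ₐ[k] k)) := by
      rw [AlgHom.convOne_def]; congr 1
    rw [h1, h2, mul_one]

theorem pc_lang_counit (L : A →ₐ[k] A)
    (hL : (toConv (AlgHom.id k A) * toConv L).ofConv = FiniteField.frobeniusAlgHom k A) (f : A) : Bialgebra.counitAlgHom k A (L f) = Bialgebra.counitAlgHom k A f := by
  have h1 := congrArg ((Bialgebra.counitAlgHom k A).comp ·) hL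
  beta_reduce at h1
  rw [pc_comp_mul, AlgHom.comp_id] at h1
  have h2 : (toConv (Bialgebra.counitAlgHom k A)) = (1 : WithConv (A →ₐ[k] k)) := by
    rw [AlgHom.convOne_def]; congr 1
  rw [h2, one_mul, pc_frob_comm] at h1
  have := DFunLike.congr_fun h1 f
  simpa [FiniteField.pow_card] using this

theorem pc_lang_frob {B : Type*} [CommRing B] [Algebra k B] (L : A →ₐ[k] A)
    (hL : (toConv (AlgHom.id k A) * toConv L).ofConv = FiniteField.frobeniusAlgHom k A) (π : A →ₐ[k] B)
    (hπ : ∀ f, counit (R := k) f = 0 → π (L f) = 0) (f : A) : π f ^ Fintype.card k = π f := by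
  have h0 : π.comp L = (Algebra.ofId k B).comp (Bialgebra.counitAlgHom k A) := by
    ext x
    have := hπ (x - algebraMap k A (counit x)) (by simp)
    rw [map_sub, map_sub, sub_eq_zero] at this
    simpa [Algebra.ofId_apply] using this
  have h1 := congrArg (π.comp ·) hL
  beta_reduce at h1
  rw [pc_comp_mul, AlgHom.comp_id, h0] at h1
  have h2 : (toConv ((Algebra.ofId k B).comp (Bialgebra.counitAlgHom k A))) =
      (1 : WithConv (A →ₐ[k] B)) := by
    rw [AlgHom.convOne_def]
  rw [h2, mul_one] at h1
  have := DFunLike.congr_fun h1 f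
  simpa using this.symm

theorem pc_lang_space [Algebra.FiniteType k A] (L : A →ₐ[k] A)
    (hL : (toConv (AlgHom.id k A) * toConv L).ofConv = FiniteField.frobeniusAlgHom k A)
    (hL2 : L = (toConv (HopfAlgebra.antipodeAlgHom k A) *
      toConv (FiniteField.frobeniusAlgHom k A)).ofConv)
    (n : ℕ) (X : Matrix (Fin n) (Fin n) A)
    (hX : ∀ i j, (comul (X i j) : A ⊗[k] A) = ∑ l, X i l ⊗ₜ[k] X l j)
    (hX1 : ∀ i j, counit (R := k) (X i j) = if i = j then 1 else 0)
    (hgen : Algebra.adjoin k (Set.range fun p : Fin n × Fin n => X p.1 p.2) = ⊤) :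
    ∃ V : Submodule k A, V.FG ∧ 1 ≤ V ∧ Algebra.adjoin k (V : Set A) = ⊤ ∧
      V.map L.toLinearMap ≤ V ^ (Fintype.card k + 1) ∧
      ∀ v ∈ V, v ^ Fintype.card k ∈ V * V.map L.toLinearMap := by
  classical
  let F := FiniteField.frobeniusAlgHom k A
  let S := HopfAlgebra.antipodeAlgHom k A
  let Y := X.map S
  let s : Set A := {1} ∪ (Set.range fun p : Fin n × Fin n => X p.1 p.2) ∪
    (Set.range fun p : Fin n × Fin n => Y p.1 p.2)
  let V := Submodule.span k s
  have h1V : (1 : A) ∈ V := Submodule.subset_span (Or.inl (Or.inl rfl))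
  have hXV : ∀ i j, X i j ∈ V := fun i j => Submodule.subset_span (Or.inl (Or.inr ⟨(i, j), rfl⟩))
  have hYV : ∀ i j, Y i j ∈ V := fun i j => Submodule.subset_span (Or.inr ⟨(i, j), rfl⟩)
  have hεX : ∀ (B : Type _) [CommRing B] [Algebra k B] (f g : A →ₐ[k] B),
      (X.map (toConv f * toConv g).ofConv) = X.map f * X.map g := by
    intro B _ _ f g
    ext i j
    simp only [Matrix.map_apply, Matrix.mul_apply]
    rw [AlgHom.convMul_def]
    simp [hX]
  have hXY : X * Y = 1 := by
    have h := hεX A (AlgHom.id k A) S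
    have h2 : (toConv (AlgHom.id k A) * toConv S : WithConv (A →ₐ[k] A)) = 1 :=
      mul_inv_cancel (toConv (AlgHom.id k A))
    rw [h2, AlgHom.convOne_def] at h
    have h3 : X.map (AlgHom.id k A) = X := by ext; simp
    rw [h3] at h
    rw [← h]
    ext i j
    simp only [Matrix.map_apply, Matrix.one_apply]
    simp [hX1]
  have hYX : Y * X = 1 := mul_eq_one_comm.1 hXY
  have e1 : X.map L = Y * X.map F := by
    rw [hL2, hεX]
  have e2 : X.map F = X * X.map L := by
    change X.map (FiniteField.frobeniusAlgHom k A) = _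
    rw [← hL, hεX]; simp
  have e3 : Y.map F * X.map F = 1 := by
    rw [← Matrix.map_mul, hYX]; simp
  have e4 : Y.map L * X.map L = 1 := by
    rw [← Matrix.map_mul, hYX]; simp
  have e5 : Y.map L = Y.map F * X := by
    have : (Y.map F * X) * X.map L = 1 := by
      rw [Matrix.mul_assoc, ← e2, e3]
    calc Y.map L = (Y.map L * X.map L) * (Y.map F * X) := by
          rw [Matrix.mul_assoc, mul_eq_one_comm.1 this, Matrix.mul_one]
      _ = _ := by rw [e4, Matrix.one_mul]
  have e6 : Y.map F = Y.map L * Y := by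
    rw [e5, Matrix.mul_assoc, hXY, Matrix.mul_one]
  have h1 : 1 ≤ V := Submodule.one_le.2 h1V
  have hFV : ∀ v ∈ V, v ^ Fintype.card k ∈ V ^ Fintype.card k :=
    fun v hv => Submodule.pow_mem_pow _ hv _
  refine ⟨V, ?_, h1, ?_, ?_, ?_⟩
  · exact Submodule.fg_span (((Set.finite_singleton _).union (Set.finite_range _)).union
      (Set.finite_range _))
  · rw [← top_le_iff, ← hgen]
    refine Algebra.adjoin_mono ?_
    rintro _ ⟨p, rfl⟩
    exact hXV _ _
  · rw [Submodule.map_le_iff_le_comap, Submodule.span_le]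
    rintro _ ((rfl | ⟨p, rfl⟩) | ⟨p, rfl⟩)
    · change L 1 ∈ V ^ (Fintype.card k + 1)
      rw [map_one]
      exact Submodule.one_le.1 (one_le_pow₀ h1)
    · change (X.map L) p.1 p.2 ∈ V ^ (Fintype.card k + 1)
      rw [e1, Matrix.mul_apply, pow_succ']
      exact Submodule.sum_mem _ fun l _ => Submodule.mul_mem_mul (hYV _ _) (hFV _ (hXV _ _))
    · change (Y.map L) p.1 p.2 ∈ V ^ (Fintype.card k + 1)
      rw [e5, Matrix.mul_apply, pow_succ]
      exact Submodule.sum_mem _ fun l _ => Submodule.mul_mem_mul (hFV _ (hYV _ _)) (hXV _ _)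
  · change V ≤ (V * V.map L.toLinearMap).comap F.toLinearMap
    rw [Submodule.span_le]
    rintro _ ((rfl | ⟨p, rfl⟩) | ⟨p, rfl⟩)
    · change F 1 ∈ V * V.map L.toLinearMap
      rw [map_one, ← one_mul (1 : A)]
      exact Submodule.mul_mem_mul h1V ⟨1, h1V, map_one L⟩
    · change (X.map F) p.1 p.2 ∈ V * V.map L.toLinearMap
      rw [e2, Matrix.mul_apply]
      exact Submodule.sum_mem _ fun l _ => Submodule.mul_mem_mul (hXV _ _) ⟨_, hXV _ _, rfl⟩
    · change (Y.map F) p.1 p.2 ∈ V * V.map L.toLinearMap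
      rw [e6, Matrix.mul_apply]
      refine Submodule.sum_mem _ fun l _ => ?_
      rw [mul_comm]
      exact Submodule.mul_mem_mul ⟨_, hYV _ _, rfl⟩ (hYV _ _)
end



/-- Point count bounds for a connected (reduced) linear algebraic group of dimension `d` over a
finite field with `q` elements, phrased via its Hopf algebra of regular functions:
`(q-1)^d ≤ #M(k) ≤ (q+1)^d`. -/
theorem stmt18 {k A : Type*} [Field k] [Fintype k] [CommRing A] [HopfAlgebra k A]
    [Algebra.FiniteType k A] [IsReduced A]
    (hconn : ∀ e : A, IsIdempotentElem e → e = 0 ∨ e = 1)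
    (d : ℕ) (hdim : ringKrullDim A = d) :
    (Fintype.card k - 1) ^ d ≤ Nat.card (A →ₐ[k] k) ∧
      Nat.card (A →ₐ[k] k) ≤ (Fintype.card k + 1) ^ d := by
  classical
  have hdom : IsDomain A := pc_isDomain (k := k) hconn
  have hq : 2 ≤ Fintype.card k := Fintype.one_lt_card
  have hΓ : Finite (A →ₐ[k] k) := pc_finite_hom A
  obtain ⟨n, X, hX, hX1, hXgen⟩ := pc_matrix (k := k) (A := A)
  obtain ⟨L, hL, hL2⟩ := pc_lang_exists (k := k) (A := A)
  obtain ⟨V, hV, h1, hgen, hLV, hFV⟩ := pc_lang_space L hL hL2 n X hX hX1 hXgen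
  obtain ⟨⟨C, D, hCD⟩, ⟨E, hE⟩⟩ := pc_growth d hdim V hV h1 hgen
  obtain ⟨c, hc⟩ := pc_pig hV (Fintype.card k) (by omega) L hFV
  have hfin : Module.Finite L.range A := pc_finite _ L hq hV h1 hgen c hc
  have hinj : Function.Injective L := pc_injective L d hdim
  have (m : ℕ) : Module.Finite k ↥(V ^ m) := Module.Finite.iff_fg.2 (hV.pow _)
  let h : ℕ → ℕ := fun m => Module.finrank k ↥(V ^ m)
  have hmono : Monotone h := fun a b hab => Submodule.finrank_mono (pc_pow_mono h1 hab)
  have hN1 : 1 ≤ Nat.card (A →ₐ[k] k) := by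
    have : Nonempty (A →ₐ[k] k) := ⟨Bialgebra.counitAlgHom k A⟩
    exact Nat.card_pos
  constructor
  · obtain ⟨W, hh, hWfg, hWr, hh0, hhW⟩ := pc_nakayama L (Bialgebra.counitAlgHom k A)
      (pc_lang_counit L hL) (fun I hI f => pc_lang_frob L hL (Ideal.Quotient.mkₐ k I)
        (fun f hf => Ideal.Quotient.eq_zero_iff_mem.2 (hI f hf)) f)
    obtain ⟨s, hs⟩ := pc_lower_rank (Fintype.card k) V L hV h1 hgen c hc W hh hWfg hh0 hhW
    by_cases hq3 : 3 ≤ Fintype.card k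
    · refine pc_num_lower _ _ d c E s (by omega) h hmono (fun j => ?_) hE
      exact (hs j).trans (Nat.mul_le_mul_right _ hWr)
    · have : Fintype.card k - 1 = 1 := by omega
      rw [this, one_pow]
      exact hN1
  · have := Fintype.ofFinite (A →ₐ[k] k)
    choose τ hτL hτε using pc_lang_trans L hL
    obtain ⟨b, hb⟩ := pc_dedekind L hinj τ
      (fun g g' e => by rw [← hτε g, ← hτε g', e]) (fun g a => DFunLike.congr_fun (hτL g) a)
    have hspan : (Submodule.span k (Set.range b)).FG := Submodule.fg_span (Set.finite_range _)
    obtain ⟨s, hs⟩ := pc_fg_le (B := fun s => V ^ s) (fun a b hab => pc_pow_mono h1 hab)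
      (pc_exists_mem_pow h1 hgen) hspan
    rw [Nat.card_eq_fintype_card]
    refine pc_num_upper _ _ d C D s (by omega) h ?_ (fun m => ?_) hCD
    · have hne : V ^ 0 ≠ ⊥ := by
        rw [pow_zero]; exact one_ne_zero
      exact Nat.one_le_iff_ne_zero.2 fun h0 => hne (Submodule.finrank_eq_zero.1 h0)
    · have := pc_upper_rank (Fintype.card k) L hV hLV b hb s
        (fun i => hs (Submodule.subset_span ⟨i, rfl⟩)) m
      rwa [Fintype.card_fin] at this
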